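/- Let V be a commutative quantale, (A_n, ν_n)_{n ∈ ℕ} a sequence of V-normed sets with connecting maps s_{m,n} : A_m → A_n for m ≤ n satisfying s_{n,n} = id and s_{n,l} ∘ s_{m,n} = s_{m,l} for m ≤ n ≤ l, and γ_n : A_n → A maps with γ_m = γ_n ∘ s_{m,n} for m ≤ n. Equip A with the norm |a| = ⨅_{N ∈ ℕ} ⨆_{n ≥ N} ⨆_{a' ∈ γ_n⁻¹(a)} ν_n a'. Then for every V-normed set (B, ν_B), every map φ : A → B, and every K ∈ ℕ, one has ⨅_{n ≥ K} |φ ∘ γ_n| ≤ |φ|, where |φ| = ⨅_{a ∈ A} [|a|, ν_B(φ a)]. (No Cauchy hypothesis on the sequence is needed.) -/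

import Mathlib

/-!
Commutativity of `⊗` makes `w ≤ [u, v]` equivalent to `u ≤ [w, v]`. Hence if `w ≤ |φ ∘ γ_n|` for
all `n ≥ K`, every point `a'` of a fibre `γ_n⁻¹(a)` with `n ≥ K` satisfies `ν_n a' ≤ [w, |φ a|]`.
This bounds the limit superior `|a|` by `[w, |φ a|]`, which is `w ≤ [|a|, |φ a|]` read backwards.
-/

section VNorm

open Filter

variable {V : Type*} [CompleteLattice V]

theorem biInf_le_liminf_of_mem {ι : Type*} {l : Filter ι} {s : Set ι} (hs : s ∈ l) (u : ι → V) :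
    ⨅ i ∈ s, u i ≤ liminf u l :=
  le_liminf_of_le (h := mem_of_superset hs fun _ hi => iInf₂_le _ hi)

theorem le_hom_comm {mul hom : V → V → V} (hmul_comm : ∀ u v : V, mul u v = mul v u)
    (hhom : ∀ u v w : V, mul w u ≤ v ↔ w ≤ hom u v) {u v w : V} :
    w ≤ hom u v ↔ u ≤ hom w v := by
  rw [← hhom, ← hhom, hmul_comm]

/-- The norm `|f| = ⨅ a, [|a|, |f a|]` of a map between `V`-normed sets, where `hom` is the internal
hom of the quantale `V`, passed as a function. -/
def mapNorm (hom : V → V → V) {A B : Type*} (νA : A → V) (νB : B → V) (f : A → B) : V :=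
  ⨅ a, hom (νA a) (νB (f a))

/-- The norm induced on the common target `L` of maps `γ i` out of `V`-normed sets, such as the
vertex of a cocone: the limit superior, along a filter `l` on the index set, of the suprema of the
norms over the fibres of `γ i`. For sequences, `l` is `atTop`. -/
def coconeNorm {ι L : Type*} {A : ι → Type*} (l : Filter ι) (ν : ∀ i, A i → V)
    (γ : ∀ i, A i → L) (a : L) : V :=
  limsup (fun i => ⨆ a' : {a' : A i // γ i a' = a}, ν i a') l

theorem coconeNorm_le_of_eventually {ι L : Type*} {A : ι → Type*} {l : Filter ι}
    {ν : ∀ i, A i → V} {γ : ∀ i, A i → L} {a : L} {u : V}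
    (h : ∀ᶠ i in l, ∀ a' : A i, γ i a' = a → ν i a' ≤ u) : coconeNorm l ν γ a ≤ u :=
  limsup_le_of_le (h := h.mono fun _ hi => iSup_le fun a' => hi a' a'.2)

theorem coconeNorm_atTop {ι L : Type*} [Preorder ι] [IsDirectedOrder ι] [Nonempty ι]
    {A : ι → Type*} (ν : ∀ i, A i → V) (γ : ∀ i, A i → L) (a : L) :
    coconeNorm atTop ν γ a =
      ⨅ M : ι, ⨆ m : ι, ⨆ _ : M ≤ m, ⨆ a' : {a' : A m // γ m a' = a}, ν m a' := by
  simp only [coconeNorm, atTop_basis.limsup_eq_iInf_iSup, iInf_pos, Set.mem_Ici]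

theorem le_mapNorm_coconeNorm_of_eventually {mul hom : V → V → V}
    (hmul_comm : ∀ u v : V, mul u v = mul v u) (hhom : ∀ u v w : V, mul w u ≤ v ↔ w ≤ hom u v)
    {ι L B : Type*} {A : ι → Type*} {l : Filter ι} {ν : ∀ i, A i → V} {γ : ∀ i, A i → L}
    {νB : B → V} {φ : L → B} {w : V} (hw : ∀ᶠ i in l, w ≤ mapNorm hom (ν i) νB (φ ∘ γ i)) :
    w ≤ mapNorm hom (coconeNorm l ν γ) νB φ := by
  refine le_iInf fun a => (le_hom_comm hmul_comm hhom).2 (coconeNorm_le_of_eventually ?_)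
  filter_upwards [hw] with i hi
  rintro a' rfl
  exact (le_hom_comm hmul_comm hhom).1 (hi.trans (iInf_le _ a'))

theorem stmt8_general {mul hom : V → V → V} (hmul_comm : ∀ u v : V, mul u v = mul v u)
    (hhom : ∀ u v w : V, mul w u ≤ v ↔ w ≤ hom u v) {ι L B : Type*} {A : ι → Type*}
    (l : Filter ι) (ν : ∀ i, A i → V) (γ : ∀ i, A i → L) (νB : B → V) (φ : L → B) :
    liminf (fun i => mapNorm hom (ν i) νB (φ ∘ γ i)) l ≤ mapNorm hom (coconeNorm l ν γ) νB φ :=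
  liminf_le_of_le (h := fun _ hw => le_mapNorm_coconeNorm_of_eventually hmul_comm hhom hw)

end VNorm

/-- With the canonical norm on the vertex of a cocone `γ` over a
sequence of `V`-normed sets with connecting maps `s`, for every `V`-normed set
`B`, map `φ` out of the vertex, and `K ∈ ℕ`, one has `⨅_{n ≥ K} |φ ∘ γ_n| ≤ |φ|`
(no Cauchy hypothesis needed). -/
theorem stmt8 {V : Type*} [CompleteLattice V] (mul : V → V → V) (k : V)
    (hom : V → V → V)
    (hmul_comm : ∀ u v : V, mul u v = mul v u)
    (hmul_assoc : ∀ u v w : V, mul (mul u v) w = mul u (mul v w))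
    (hmul_unit : ∀ u : V, mul u k = u)
    (hmul_sSup : ∀ (u : V) (S : Set V), mul u (sSup S) = ⨆ v ∈ S, mul u v)
    (hhom : ∀ u v w : V, mul w u ≤ v ↔ w ≤ hom u v)
    (A : ℕ → Type*) (ν : ∀ n, A n → V)
    (s : ∀ {m n : ℕ}, m ≤ n → A m → A n)
    (hs_id : ∀ (n : ℕ) (a : A n), s (le_refl n) a = a)
    (hs_comp : ∀ {m n l : ℕ} (h₁ : m ≤ n) (h₂ : n ≤ l) (a : A m),
      s h₂ (s h₁ a) = s (h₁.trans h₂) a)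
    {L : Type*} (γ : ∀ n, A n → L)
    (hγ : ∀ {m n : ℕ} (h : m ≤ n) (a : A m), γ m a = γ n (s h a)) :
    ∀ (B : Type*) (νB : B → V) (φ : L → B) (K : ℕ),
      (⨅ n : ℕ, ⨅ _ : K ≤ n, ⨅ a : A n, hom (ν n a) (νB (φ (γ n a))))
        ≤ ⨅ a : L,
            hom (⨅ M : ℕ, ⨆ m : ℕ, ⨆ _ : M ≤ m, ⨆ a' : {a' : A m // γ m a' = a}, ν m a'.1)
              (νB (φ a)) := by
  intro B νB φ K
  simpa only [mapNorm, coconeNorm_atTop, Function.comp_apply, Set.mem_Ici] using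
    (biInf_le_liminf_of_mem (Filter.Ici_mem_atTop K) _).trans
      (stmt8_general hmul_comm hhom Filter.atTop ν γ νB φ)
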